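/- Let α ∈ ℚ be a rational number. (i) If α < 0, then for every prime ℓ the Ruban continued fraction expansion of α in ℚ_ℓ does not terminate. (ii) If α ≥ 0 and α ∈ ℤ, then there are only finitely many primes ℓ such that the Ruban continued fraction expansion of α in ℚ_ℓ does not terminate. (iii) If α ≥ 0 and α ∉ ℤ, then there are only finitely many primes ℓ such that the Ruban continued fraction expansion of α in ℚ_ℓ terminates. -/

import Mathlib

open Filter Topology
open scoped Classical

/-- `a` is the `ℓ`-adic integral part of the rational number `α`. -/
def IsRubanFloorQ (p : ℕ) (α a : ℚ) : Prop :=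
  (∃ (m : ℤ) (k : ℕ), a = (m : ℚ) / (p : ℚ) ^ k) ∧ 0 ≤ a ∧ a < (p : ℚ) ∧
    padicNorm p (α - a) < 1

noncomputable def rubanFloorQ (p : ℕ) (α : ℚ) : ℚ :=
  if h : ∃ a : ℚ, IsRubanFloorQ p α a then h.choose else 0

/-- Complete quotients of the Ruban continued fraction expansion of a rational number. -/
noncomputable def rubanCQQ (p : ℕ) (α : ℚ) : ℕ → ℚ
  | 0 => α
  | n + 1 => (rubanCQQ p α n - rubanFloorQ p (rubanCQQ p α n))⁻¹

/-- Partial quotients of the Ruban continued fraction expansion of a rational number. -/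
noncomputable def rubanPQQ (p : ℕ) (α : ℚ) (n : ℕ) : ℚ :=
  rubanFloorQ p (rubanCQQ p α n)

/-- The Ruban continued fraction expansion of `α` terminates. -/
def RubanTerminatesQ (p : ℕ) (α : ℚ) : Prop :=
  ∃ n, rubanCQQ p α n = rubanPQQ p α n

/-!
Integral parts are non-negative and a terminating expansion ends in a complete quotient equal to
its integral part, so going backwards through the expansion gives `⌊α⌋ ≤ α`; this rules out `α < 0`.
In a base `ℓ > 1` coprime to the denominator of `α = A / B`, the integral part of `α` is the integer
`z ∈ [0, ℓ)` with `ℓ ∣ A - z B`. For `B = 1` and `ℓ > A ≥ 0` this forces `z = A`, and the expansion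
stops at once. For `B ≠ 1`, termination gives `0 ≤ A - z B ≤ A`, so `ℓ > A` would force `A = z B`,
which is absurd.
-/

theorem padicNorm_lt_one_iff_dvd_num {p : ℕ} (hp : 1 < p) (q : ℚ) :
    padicNorm p q < 1 ↔ (p : ℤ) ∣ q.num := by
  rcases eq_or_ne q 0 with rfl | hq
  · simp
  have hp' : (1 : ℚ) < p := mod_cast hp
  have hnum : padicValInt p q.num = 0 ↔ ¬ (p : ℤ) ∣ q.num := by
    simp [padicValInt.eq_zero_iff, hp.ne', hq]
  rw [padicNorm.eq_zpow_of_nonzero hq, zpow_lt_one_iff_right₀ hp', neg_lt_zero, padicValRat_def]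
  refine ⟨fun hval ↦ by_contra fun hdvd ↦ ?_, fun hdvd ↦ ?_⟩
  · have := hnum.2 hdvd
    omega
  · have hden : padicValNat p q.den = 0 := padicValNat.eq_zero_of_not_dvd fun hpd ↦
      hp.ne' (Nat.eq_one_of_dvd_coprimes q.reduced (Int.natCast_dvd.1 hdvd) hpd)
    have := mt hnum.1 (not_not.2 hdvd)
    omega

theorem num_sub_intCast (q : ℚ) (z : ℤ) : (q - z).num = q.num - z * q.den := by
  have h := Rat.mul_den_eq_num (q - z)
  rw [Rat.sub_intCast_den, sub_mul, Rat.mul_den_eq_num] at h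
  exact_mod_cast h.symm

theorem isRubanFloorQ_intCast_iff {p : ℕ} (hp : 1 < p) {α : ℚ} {z : ℤ} :
    IsRubanFloorQ p α z ↔ 0 ≤ z ∧ z < p ∧ (p : ℤ) ∣ α.num - z * α.den := by
  have hmem : ∃ (m : ℤ) (k : ℕ), (z : ℚ) = m / (p : ℚ) ^ k := ⟨z, 0, by simp⟩
  rw [IsRubanFloorQ, padicNorm_lt_one_iff_dvd_num hp, num_sub_intCast]
  simp only [hmem, true_and, Int.cast_nonneg_iff]
  norm_cast

theorem IsRubanFloorQ.den_eq_one {p : ℕ} (hp : 1 < p) {α a : ℚ} (hα : p.Coprime α.den)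
    (ha : IsRubanFloorQ p α a) : a.den = 1 := by
  obtain ⟨⟨m, k, hmk⟩, -, -, hnorm⟩ := ha
  have hsub : p.Coprime (α - a).den := (α - a).reduced.coprime_dvd_left
    (Int.natCast_dvd.1 ((padicNorm_lt_one_iff_dvd_num hp _).1 hnorm))
  have hcop : p.Coprime a.den := by
    have hdvd : a.den ∣ α.den * (α - a).den := by
      simpa only [sub_sub_cancel] using Rat.sub_den_dvd α (α - a)
    exact (hα.mul_right hsub).coprime_dvd_right hdvd
  have hpow : a.den ∣ p ^ k := by
    have := Rat.den_dvd m (p ^ k)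
    rw [hmk]
    exact_mod_cast this
  exact (hcop.pow_left k).symm.eq_one_of_dvd hpow

theorem exists_isRubanFloorQ_intCast {p : ℕ} (hp : 1 < p) {α : ℚ} (hα : p.Coprime α.den) :
    ∃ z : ℤ, IsRubanFloorQ p α z := by
  have : NeZero p := ⟨by omega⟩
  let r : ZMod p := α.num * (α.den : ZMod p)⁻¹
  refine ⟨r.val, (isRubanFloorQ_intCast_iff hp).2
    ⟨Int.natCast_nonneg _, mod_cast r.val_lt, ?_⟩⟩
  have hr : r * α.den = α.num := by
    rw [mul_assoc, mul_comm _ (α.den : ZMod p), ZMod.coe_mul_inv_eq_one _ hα.symm, mul_one]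
  simp [← ZMod.intCast_zmod_eq_zero_iff_dvd, hr]

theorem isRubanFloorQ_rubanFloorQ {p : ℕ} {α : ℚ} (h : ∃ a, IsRubanFloorQ p α a) :
    IsRubanFloorQ p α (rubanFloorQ p α) := by
  rw [rubanFloorQ, dif_pos h]
  exact h.choose_spec

theorem exists_rubanFloorQ_eq_intCast {p : ℕ} (hp : 1 < p) {α : ℚ} (hα : p.Coprime α.den) :
    ∃ z : ℤ, rubanFloorQ p α = z ∧ 0 ≤ z ∧ z < p ∧ (p : ℤ) ∣ α.num - z * α.den := by
  obtain ⟨w, hw⟩ := exists_isRubanFloorQ_intCast hp hα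
  have hfloor := isRubanFloorQ_rubanFloorQ ⟨_, hw⟩
  have hint := (Rat.den_eq_one_iff _).1 (hfloor.den_eq_one hp hα)
  rw [← hint] at hfloor
  exact ⟨_, hint.symm, (isRubanFloorQ_intCast_iff hp).1 hfloor⟩

theorem rubanFloorQ_natCast {p : ℕ} (hp : 1 < p) {n : ℕ} (hn : n < p) :
    rubanFloorQ p n = n := by
  obtain ⟨z, hz, hz0, hzp, hdvd⟩ := exists_rubanFloorQ_eq_intCast (α := n) hp (by simp)
  have hnz : (n : ℤ) - z = 0 :=
    Int.eq_zero_of_abs_lt_dvd (by simpa using hdvd) (abs_lt.2 ⟨by omega, by omega⟩)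
  rw [hz, ← sub_eq_zero.1 hnz, Int.cast_natCast]

theorem rubanFloorQ_nonneg (p : ℕ) (α : ℚ) : 0 ≤ rubanFloorQ p α := by
  by_cases h : ∃ a, IsRubanFloorQ p α a
  · exact (isRubanFloorQ_rubanFloorQ h).2.1
  · rw [rubanFloorQ, dif_neg h]

theorem RubanTerminatesQ.rubanFloorQ_le {p : ℕ} {α : ℚ} (h : RubanTerminatesQ p α) :
    rubanFloorQ p α ≤ α := by
  obtain ⟨n, hn⟩ := h
  replace hn : rubanPQQ p α n ≤ rubanCQQ p α n := hn.ge
  induction n with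
  | zero => exact hn
  | succ n ih =>
    have hinv : 0 ≤ (rubanCQQ p α n - rubanPQQ p α n)⁻¹ := (rubanFloorQ_nonneg p _).trans hn
    exact ih (sub_nonneg.1 (inv_nonneg.1 hinv))

theorem RubanTerminatesQ.nonneg {p : ℕ} {α : ℚ} (h : RubanTerminatesQ p α) : 0 ≤ α :=
  (rubanFloorQ_nonneg p α).trans h.rubanFloorQ_le

theorem rubanTerminatesQ_natCast {p : ℕ} (hp : 1 < p) {n : ℕ} (hn : n < p) :
    RubanTerminatesQ p n :=
  ⟨0, (rubanFloorQ_natCast hp hn).symm⟩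

theorem RubanTerminatesQ.den_eq_one {p : ℕ} (hp : 1 < p) {α : ℚ} (hα : p.Coprime α.den)
    (hnum : α.num < p) (h : RubanTerminatesQ p α) : α.den = 1 := by
  obtain ⟨z, hz, hz0, -, hdvd⟩ := exists_rubanFloorQ_eq_intCast hp hα
  have hle : z * α.den ≤ α.num := by
    have hzα : (z : ℚ) ≤ α := hz ▸ h.rubanFloorQ_le
    simpa using (Rat.le_iff _ _).1 hzα
  have hzero : α.num - z * α.den = 0 := by
    have : 0 ≤ z * (α.den : ℤ) := by positivity
    exact Int.eq_zero_of_abs_lt_dvd hdvd (abs_lt.2 ⟨by omega, by omega⟩)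
  have hden : α.den ∣ α.num.natAbs :=
    Int.natCast_dvd.1 ⟨z, by rw [sub_eq_zero.1 hzero, mul_comm]⟩
  exact α.reduced.symm.eq_one_of_dvd hden

theorem ruban_rational_termination_varying_prime_general (α : ℚ) :
    (α < 0 → ∀ ℓ : ℕ, 1 < ℓ → ¬ RubanTerminatesQ ℓ α) ∧
    (0 ≤ α → α.den = 1 → {ℓ : ℕ | 1 < ℓ ∧ ¬ RubanTerminatesQ ℓ α}.Finite) ∧
    (α.den ≠ 1 → {ℓ : ℕ | 1 < ℓ ∧ ℓ.Coprime α.den ∧ RubanTerminatesQ ℓ α}.Finite) := by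
  refine ⟨fun hneg ℓ _ h ↦ hneg.not_ge h.nonneg, fun h0 hden ↦ ?_, fun hden ↦ ?_⟩
  · lift α to ℤ using hden
    lift α to ℕ using Int.cast_nonneg_iff.1 h0
    refine (Set.finite_Iic α).subset fun ℓ ⟨hℓ, hterm⟩ ↦ ?_
    exact not_lt.1 fun hlt ↦ hterm (rubanTerminatesQ_natCast hℓ hlt)
  · refine (Set.finite_Iic α.num.toNat).subset fun ℓ ⟨hℓ, hcop, hterm⟩ ↦ ?_
    have hle : (ℓ : ℤ) ≤ α.num := not_lt.1 fun hlt ↦ hden (hterm.den_eq_one hℓ hcop hlt)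
    exact Int.toNat_le_toNat hle

/-- (i) Negative rationals never have a terminating Ruban expansion;
(ii) for a non-negative integer the expansion terminates for all but finitely many primes;
(iii) for a non-negative non-integral rational the expansion terminates for at most
finitely many primes. -/
theorem ruban_rational_termination_varying_prime (α : ℚ) :
    (α < 0 → ∀ ℓ : ℕ, ℓ.Prime → ¬ RubanTerminatesQ ℓ α) ∧
    (0 ≤ α → α.den = 1 → {ℓ : ℕ | ℓ.Prime ∧ ¬ RubanTerminatesQ ℓ α}.Finite) ∧
    (0 ≤ α → α.den ≠ 1 → {ℓ : ℕ | ℓ.Prime ∧ RubanTerminatesQ ℓ α}.Finite) := by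
  obtain ⟨hneg, hint, hfrac⟩ := ruban_rational_termination_varying_prime_general α
  refine ⟨fun h0 ℓ hℓ ↦ hneg h0 ℓ hℓ.one_lt,
    fun h0 hden ↦ (hint h0 hden).subset fun ℓ h ↦ ⟨h.1.one_lt, h.2⟩, fun _ hden ↦ ?_⟩
  refine ((hfrac hden).union (Set.finite_Iic α.den)).subset fun ℓ ⟨hℓ, hterm⟩ ↦ ?_
  refine (lt_or_ge α.den ℓ).imp (fun hlt ↦ ?_) id
  exact ⟨hℓ.one_lt, Nat.coprime_of_lt_prime α.den_nz hlt hℓ, hterm⟩
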